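/- Fix a labelled Markov chain ⟨S, L, τ, ℓ⟩. Let R ⊆ S×S be a probabilistic bisimulation with ≃ ⊆ R ⊆ ∼. Then for all (s,t), (t,u) ∈ Filter(R), if s ≃ t or t ≃ u, then (s,u) ∈ Filter(R). -/

import Mathlib

open Finset Filter
open scoped Classical

/-- `μ` is a probability distribution on the finite type `X`. -/
def IsDist {X : Type*} [Fintype X] (μ : X → ℝ) : Prop :=
  (∀ x, 0 ≤ μ x) ∧ ∑ x, μ x = 1

/-- `ω` is a coupling of the distributions `μ` and `ν`. -/
def IsCoupling {X : Type*} [Fintype X] (ω : X × X → ℝ) (μ ν : X → ℝ) : Prop :=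
  IsDist ω ∧ (∀ x, ∑ y, ω (x, y) = μ x) ∧ (∀ x, ∑ y, ω (y, x) = ν x)

/-- Total variation distance: the maximum pointwise difference. -/
noncomputable def dTV {X : Type*} [Fintype X] (μ ν : X → ℝ) : ℝ :=
  ⨆ x, |μ x - ν x|

/-- The support of a (sub)distribution: points of positive probability. -/
def psupp {X : Type*} (μ : X → ℝ) : Set X := {x | 0 < μ x}

/-- Distance between functions into distributions. -/
noncomputable def dF {A B : Type*} [Fintype B] (f g : A → B → ℝ) : ℝ :=
  ⨆ a, dTV (f a) (g a)

/-- `τ` is a transition probability function on `S`. -/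
def IsTransFn {S : Type*} [Fintype S] (τ : S → S → ℝ) : Prop := ∀ s, IsDist (τ s)

/-- The diagonal `S²_Δ`. -/
def SDelta (S : Type*) : Set (S × S) := {p | p.1 = p.2}

/-- `P` is a policy for `τ` (with labelling `ℓ`). -/
def IsPolicy {S L : Type*} [Fintype S] (ℓ : S → L) (τ : S → S → ℝ)
    (P : S × S → S × S → ℝ) : Prop :=
  (∀ p, IsDist (P p)) ∧
  (∀ p : S × S, ℓ p.1 = ℓ p.2 → IsCoupling (P p) (τ p.1) (τ p.2)) ∧
  (∀ p : S × S, ℓ p.1 ≠ ℓ p.2 → psupp (P p) = {p})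

/-- A policy is `S²_Δ`-closed if the support of `P (s,s)` lies in the diagonal. -/
def DeltaClosed {S : Type*} (P : S × S → S × S → ℝ) : Prop :=
  ∀ s : S, psupp (P (s, s)) ⊆ SDelta S

/-- `d` is a `[0,1]`-valued function. -/
def Is01 {A : Type*} (d : A → ℝ) : Prop := ∀ a, 0 ≤ d a ∧ d a ≤ 1

/-- `d` is the least fixed point of `F` on the complete lattice of `[0,1]`-valued functions. -/
def IsLfpOn {A : Type*} (F : (A → ℝ) → (A → ℝ)) (d : A → ℝ) : Prop :=
  Is01 d ∧ F d = d ∧ ∀ e, Is01 e → F e = e → ∀ a, d a ≤ e a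

/-- The map `Γ_P` whose least fixed point is `γ_P`. -/
noncomputable def GammaF {S L : Type*} [Fintype S] (ℓ : S → L)
    (P : S × S → S × S → ℝ) (d : S × S → ℝ) : S × S → ℝ :=
  fun p => if ℓ p.1 ≠ ℓ p.2 then 1 else ∑ q, P p q * d q

/-- The map `Δ_τ` whose least fixed point is the probabilistic bisimilarity distance `δ_τ`. -/
noncomputable def DeltaF {S L : Type*} [Fintype S] (ℓ : S → L)
    (τ : S → S → ℝ) (d : S × S → ℝ) : S × S → ℝ :=
  fun p => if ℓ p.1 ≠ ℓ p.2 then 1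
    else sInf {r | ∃ ω, IsCoupling ω (τ p.1) (τ p.2) ∧ r = ∑ q, ω q * d q}

/-- The map whose least fixed point is `ρ_P`, the probability of reaching `S²_Δ`. -/
noncomputable def ReachF {S : Type*} [Fintype S]
    (P : S × S → S × S → ℝ) (e : S × S → ℝ) : S × S → ℝ :=
  fun p => if p.1 = p.2 then 1 else ∑ q, P p q * e q

/-- States `s` and `t` are robustly probabilistically bisimilar. -/
def Robust {S L : Type*} [Fintype S] (ℓ : S → L) (τ : S → S → ℝ) (s t : S) : Prop :=
  ∃ P ρ, IsPolicy ℓ τ P ∧ IsLfpOn (ReachF P) ρ ∧ ρ (s, t) = 1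

/-- `R` is a probabilistic bisimulation. -/
def IsBisim {S L : Type*} [Fintype S] (ℓ : S → L) (τ : S → S → ℝ)
    (R : Set (S × S)) : Prop :=
  Equivalence (fun s t => (s, t) ∈ R) ∧
  ∀ p ∈ R, ℓ p.1 = ℓ p.2 ∧ ∃ ω, IsCoupling ω (τ p.1) (τ p.2) ∧ psupp ω ⊆ R

/-- Probabilistic bisimilarity `∼`. -/
def Bisimilar {S L : Type*} [Fintype S] (ℓ : S → L) (τ : S → S → ℝ) (s t : S) : Prop :=
  ∃ R, IsBisim ℓ τ R ∧ (s, t) ∈ R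

/-- A step of a path in `⟨S×S, P⟩` supported by `R`. -/
def SupStep {S : Type*} (P : S × S → S × S → ℝ) (R : Set (S × S)) (a b : S × S) : Prop :=
  a ∈ R ∧ psupp (P a) ⊆ R ∧ 0 < P a b

/-- `R` supports a path from `p` to `S²_Δ` in `⟨S×S, P⟩`. -/
def SupportsPathToDelta {S : Type*} (P : S × S → S × S → ℝ) (R : Set (S × S))
    (p : S × S) : Prop :=
  ∃ q : S × S, q.1 = q.2 ∧ Relation.ReflTransGen (SupStep P R) p q ∧
    q ∈ R ∧ psupp (P q) ⊆ R

/-- `R` is a robust bisimulation. -/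
def IsRobustBisim {S L : Type*} [Fintype S] (ℓ : S → L) (τ : S → S → ℝ)
    (R : Set (S × S)) : Prop :=
  IsBisim ℓ τ R ∧ ∀ p ∈ R, ∃ P, IsPolicy ℓ τ P ∧ SupportsPathToDelta P R p

/-- The function `Filter` from the algorithm. -/
def FilterFn {S L : Type*} [Fintype S] (ℓ : S → L) (τ : S → S → ℝ)
    (R : Set (S × S)) : Set (S × S) :=
  {p ∈ R | ∃ P, IsPolicy ℓ τ P ∧ SupportsPathToDelta P R p}

/-- The function `Prune` from the algorithm. -/
def PruneFn {S : Type*} (Q : Set (S × S)) : Set (S × S) :=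
  {p ∈ Q | ∀ u : S, ((p.2, u) ∈ Q → (p.1, u) ∈ Q) ∧ ((u, p.1) ∈ Q → (u, p.2) ∈ Q)}

/-- `B` is the greatest probabilistic bisimulation contained in `Q` (i.e. `B = Bisim(Q)`). -/
def IsGreatestBisimIn {S L : Type*} [Fintype S] (ℓ : S → L) (τ : S → S → ℝ)
    (Q B : Set (S × S)) : Prop :=
  IsBisim ℓ τ B ∧ B ⊆ Q ∧ ∀ B', IsBisim ℓ τ B' → B' ⊆ Q → B' ⊆ B

/-- Reachability in the Markov chain `⟨S×S, P⟩`. -/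
def Reach {S : Type*} (P : S × S → S × S → ℝ) (p q : S × S) : Prop :=
  Relation.ReflTransGen (fun a b => 0 < P a b) p q

/-- `C` is a communication class of `⟨S×S, P⟩`. -/
def IsCommClass {S : Type*} (P : S × S → S × S → ℝ) (C : Set (S × S)) : Prop :=
  ∃ p, C = {q | Reach P p q ∧ Reach P q p}

/-- `C` is closed: no transition of positive probability leaves `C`. -/
def IsClosedClass {S : Type*} (P : S × S → S × S → ℝ) (C : Set (S × S)) : Prop :=
  ∀ p ∈ C, psupp (P p) ⊆ C

/-!
Inside a bisimulation `R`, the coupling that spreads mass proportionally within each `R`-class is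
positive on every pair of `R` whose two components have positive probability. Hence membership in
`Filter(R)` does not depend on policies: `(s, t) ∈ Filter(R)` iff the two states can move in
lockstep through `R` until they meet. If `s ≃ t`, then every step from `t` is matched by a step
from `s` to a state that is again robustly bisimilar, so a lockstep path from `(t, u)` to `(z, z)`
lifts to one from `(s, u)` to some `(s', z)` with `s' ≃ z`. Robustly bisimilar states can meet,
because the pairs that cannot would form a closed set avoiding the diagonal, and on such a set the
least fixed point `ρ_P` vanishes.
-/

section Couplings

variable {X : Type*} [Fintype X] {ω : X × X → ℝ} {μ ν : X → ℝ} {R : Set (X × X)}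

lemma isDist_single [DecidableEq X] (x : X) : IsDist (Pi.single x 1) := by
  refine ⟨fun y => ?_, by simp⟩
  by_cases hy : y = x <;> simp [hy]

lemma IsCoupling.left_pos_iff (h : IsCoupling ω μ ν) {x : X} : 0 < μ x ↔ ∃ y, 0 < ω (x, y) := by
  simp only [← h.2.1 x, sum_pos_iff_of_nonneg fun y _ => h.1.1 (x, y), mem_univ, true_and]

lemma IsCoupling.right_pos_iff (h : IsCoupling ω μ ν) {y : X} : 0 < ν y ↔ ∃ x, 0 < ω (x, y) := by
  simp only [← h.2.2 y, sum_pos_iff_of_nonneg fun x _ => h.1.1 (x, y), mem_univ, true_and]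

lemma isCoupling_of_marginals (hμ : IsDist μ) (hω : ∀ q, 0 ≤ ω q)
    (hleft : ∀ x, ∑ y, ω (x, y) = μ x) (hright : ∀ y, ∑ x, ω (x, y) = ν y) :
    IsCoupling ω μ ν := by
  refine ⟨⟨hω, ?_⟩, hleft, hright⟩
  simp only [Fintype.sum_prod_type, hleft, hμ.2]

lemma isCoupling_mul (hμ : IsDist μ) (hν : IsDist ν) :
    IsCoupling (fun q => μ q.1 * ν q.2) μ ν :=
  isCoupling_of_marginals hμ (fun q => mul_nonneg (hμ.1 q.1) (hν.1 q.2))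
    (fun x => by simp only [← mul_sum, hν.2, mul_one])
    (fun y => by simp only [← sum_mul, hμ.2, one_mul])

/-- The mass that `μ` gives to the class of `x` under the relation `R`. -/
noncomputable def classMass (R : Set (X × X)) (μ : X → ℝ) (x : X) : ℝ :=
  ∑ z with (x, z) ∈ R, μ z

lemma classMass_congr (hE : Equivalence fun x y => (x, y) ∈ R) {x y : X} (hxy : (x, y) ∈ R) :
    classMass R μ x = classMass R μ y := by
  have hclass : ∀ z, (x, z) ∈ R ↔ (y, z) ∈ R :=
    fun z => ⟨hE.trans (hE.symm hxy), hE.trans hxy⟩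
  simp only [classMass, hclass]

lemma le_classMass (hμ : ∀ z, 0 ≤ μ z) {x y : X} (hxy : (x, y) ∈ R) : μ y ≤ classMass R μ x :=
  single_le_sum (fun z _ => hμ z) (by simpa using hxy)

lemma IsCoupling.classMass_eq (hE : Equivalence fun x y => (x, y) ∈ R)
    (h : IsCoupling ω μ ν) (hω : psupp ω ⊆ R) (x : X) : classMass R μ x = classMass R ν x := by
  have mem_of_ne_zero : ∀ q, ω q ≠ 0 → q ∈ R := fun q hq => hω ((h.1.1 q).lt_of_ne' hq)
  calc classMass R μ x
      = ∑ z with (x, z) ∈ R, ∑ w with (x, w) ∈ R, ω (z, w) :=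
        sum_congr rfl fun z hz => by
          rw [sum_filter_of_ne fun w _ hw =>
            hE.trans (mem_filter_univ z |>.1 hz) (mem_of_ne_zero _ hw), h.2.1]
    _ = ∑ w with (x, w) ∈ R, ∑ z with (x, z) ∈ R, ω (z, w) := sum_comm
    _ = classMass R ν x :=
        sum_congr rfl fun w hw => by
          rw [sum_filter_of_ne fun z _ hz =>
            hE.trans (mem_filter_univ w |>.1 hw) (hE.symm (mem_of_ne_zero _ hz)), h.2.2]

/-- The conditionally independent coupling of `μ` and `ν` given the `R`-class. It is a coupling
when `μ` and `ν` give equal mass to every class; on a class of mass zero the quotient is `0`. -/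
noncomputable def classCoupling (R : Set (X × X)) (μ ν : X → ℝ) (q : X × X) : ℝ :=
  if q ∈ R then μ q.1 * ν q.2 / classMass R ν q.1 else 0

lemma psupp_classCoupling_subset : psupp (classCoupling R μ ν) ⊆ R := by
  intro q hq
  by_contra hqR
  simp [psupp, classCoupling, hqR] at hq

lemma classCoupling_pos (hν : ∀ y, 0 ≤ ν y) {x y : X} (hxy : (x, y) ∈ R)
    (hx : 0 < μ x) (hy : 0 < ν y) : 0 < classCoupling R μ ν (x, y) := by
  have hmass : 0 < classMass R ν x := hy.trans_le (le_classMass hν hxy)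
  simp only [classCoupling, hxy, if_true]
  positivity

lemma classCoupling_nonneg (hμ : ∀ x, 0 ≤ μ x) (hν : ∀ y, 0 ≤ ν y) (q : X × X) :
    0 ≤ classCoupling R μ ν q := by
  unfold classCoupling
  split_ifs
  · exact div_nonneg (mul_nonneg (hμ _) (hν _)) (sum_nonneg fun z _ => hν z)
  · exact le_rfl

lemma classCoupling_swap (hE : Equivalence fun x y => (x, y) ∈ R)
    (hmass : ∀ x, classMass R μ x = classMass R ν x) (x y : X) :
    classCoupling R μ ν (x, y) = classCoupling R ν μ (y, x) := by
  by_cases hxy : (x, y) ∈ R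
  · simp only [classCoupling, hxy, hE.symm hxy, if_true, hmass, classMass_congr hE hxy, mul_comm]
  · have hyx : (y, x) ∉ R := fun h => hxy (hE.symm h)
    simp only [classCoupling, hxy, hyx, if_false]

lemma sum_classCoupling (hE : Equivalence fun x y => (x, y) ∈ R) (hμ : ∀ x, 0 ≤ μ x)
    (hmass : ∀ x, classMass R μ x = classMass R ν x) (x : X) :
    ∑ y, classCoupling R μ ν (x, y) = μ x := by
  have hfactor : ∑ y, classCoupling R μ ν (x, y) = μ x * classMass R ν x / classMass R ν x := by
    simp only [classCoupling, ← sum_filter, ← sum_div, ← mul_sum, classMass]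
  rw [hfactor]
  refine mul_div_cancel_of_imp fun hzero => (hμ x).antisymm' ?_
  exact (le_classMass hμ (hE.refl x)).trans_eq ((hmass x).trans hzero)

lemma isCoupling_classCoupling (hE : Equivalence fun x y => (x, y) ∈ R) (hμ : IsDist μ)
    (hν : IsDist ν) (hmass : ∀ x, classMass R μ x = classMass R ν x) :
    IsCoupling (classCoupling R μ ν) μ ν :=
  isCoupling_of_marginals hμ (classCoupling_nonneg hμ.1 hν.1)
    (sum_classCoupling hE hμ.1 hmass)
    (fun y => by
      simp only [classCoupling_swap hE hmass, sum_classCoupling hE hν.1 fun x => (hmass x).symm])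

end Couplings

section LeastFixedPoints

lemma exists_isFixedPt_mem_Icc {α : Type*} [ConditionallyCompleteLattice α] {f : α → α} {a b : α}
    (hab : a ≤ b) (hf : MonotoneOn f (Set.Icc a b)) (ha : a ≤ f a) (hb : f b ≤ b) :
    ∃ x ∈ Set.Icc a b, Function.IsFixedPt f x := by
  have : Fact (a ≤ b) := ⟨hab⟩
  have hmaps : ∀ x ∈ Set.Icc a b, f x ∈ Set.Icc a b := fun x hx =>
    ⟨ha.trans (hf ⟨le_rfl, hab⟩ hx hx.1), (hf hx ⟨hab, le_rfl⟩ hx.2).trans hb⟩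
  let g : Set.Icc a b →o Set.Icc a b :=
    ⟨fun x => ⟨f x, hmaps x x.2⟩, fun x y hxy => hf x.2 y.2 hxy⟩
  exact ⟨g.lfp, g.lfp.2, congrArg Subtype.val g.isFixedPt_lfp⟩

lemma IsLfpOn.le_of_map_le {A : Type*} {F : (A → ℝ) → A → ℝ} {d e : A → ℝ} (hd : IsLfpOn F d)
    (hF : MonotoneOn F (Set.Icc 0 e)) (hzero : 0 ≤ F 0) (he : Is01 e) (hle : F e ≤ e) :
    d ≤ e := by
  obtain ⟨x, ⟨hx0, hxe⟩, hx⟩ := exists_isFixedPt_mem_Icc (fun a => (he a).1) hF hzero hle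
  have hx01 : Is01 x := fun a => ⟨hx0 a, (hxe a).trans (he a).2⟩
  exact fun a => (hd.2.2 x hx01 hx a).trans (hxe a)

variable {S : Type*} [Fintype S] {P : S × S → S × S → ℝ} {ρ : S × S → ℝ}

lemma reachF_monotone (hP : ∀ p q, 0 ≤ P p q) : Monotone (ReachF P) := by
  intro d e hde p
  unfold ReachF
  split_ifs
  · exact le_rfl
  · exact sum_le_sum fun q _ => mul_le_mul_of_nonneg_left (hde q) (hP p q)

lemma reachF_one (hP : ∀ p, ∑ q, P p q = 1) : ReachF P 1 = 1 := by
  ext p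
  simp [ReachF, hP]

lemma IsLfpOn.eq_one_of_mem_diagonal (hρ : IsLfpOn (ReachF P) ρ) (s : S) : ρ (s, s) = 1 := by
  rw [← hρ.2.1]
  simp [ReachF]

lemma IsLfpOn.eq_one_of_step (hP : ∀ p, IsDist (P p)) (hρ : IsLfpOn (ReachF P) ρ) {p q : S × S}
    (hp : ρ p = 1) (hne : p.1 ≠ p.2) (hpq : 0 < P p q) : ρ q = 1 := by
  have havg : ∑ r, P p r * ρ r = 1 := by
    simpa only [ReachF, hne, if_false, hp] using congrFun hρ.2.1 p
  have hdefect : ∑ r, P p r * (1 - ρ r) = 0 := by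
    simp only [mul_sub, mul_one, sum_sub_distrib, havg, (hP p).2, sub_self]
  have hterm : P p q * (1 - ρ q) = 0 :=
    (sum_eq_zero_iff_of_nonneg fun r _ => mul_nonneg ((hP p).1 r) (sub_nonneg.2 (hρ.1 r).2)).1
      hdefect q (mem_univ q)
  exact (sub_eq_zero.1 ((mul_eq_zero.1 hterm).resolve_left hpq.ne')).symm

lemma IsLfpOn.eq_zero_of_isClosedClass (hP : ∀ p, IsDist (P p)) (hρ : IsLfpOn (ReachF P) ρ)
    {U : Set (S × S)} (hU : IsClosedClass P U) (hdiag : Disjoint U (SDelta S))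
    {p : S × S} (hp : p ∈ U) : ρ p = 0 := by
  have hmono := reachF_monotone fun p => (hP p).1
  have he : Is01 (Uᶜ.indicator (1 : S × S → ℝ)) := fun q =>
    ⟨Set.indicator_nonneg (fun _ _ => zero_le_one) q,
      Set.indicator_le_self' (fun _ _ => zero_le_one) q⟩
  have hle : ReachF P (Uᶜ.indicator 1) ≤ Uᶜ.indicator 1 := by
    intro q
    by_cases hq : q ∈ U
    · have hne : q.1 ≠ q.2 := Set.disjoint_left.1 hdiag hq
      have hout : ∀ r, P q r * Uᶜ.indicator (1 : S × S → ℝ) r = 0 := fun r => by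
        rcases ((hP q).1 r).eq_or_lt with hqr | hqr
        · rw [← hqr, zero_mul]
        · simp [hU q hq hqr]
      simp [ReachF, hne, hout, hq]
    · calc ReachF P (Uᶜ.indicator 1) q
          ≤ ReachF P 1 q := hmono (fun r => (he r).2) q
        _ = Uᶜ.indicator 1 q := by simp [reachF_one fun p => (hP p).2, hq]
  have hzero : 0 ≤ ReachF P 0 := fun q => by
    unfold ReachF
    split_ifs <;> simp
  have hρe := hρ.le_of_map_le (hmono.monotoneOn _) hzero he hle p
  exact ((hρ.1 p).1).antisymm' (by simpa [hp] using hρe)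

end LeastFixedPoints

section JointMoves

variable {S : Type*} {τ : S → S → ℝ} {R : Set (S × S)}

/-- Two states can meet: moving in lockstep along transitions of positive probability, through
pairs of `R`, they can arrive at the same state. Unlike `SupportsPathToDelta`, this involves no
policy. -/
inductive CanMeet (τ : S → S → ℝ) (R : Set (S × S)) : S → S → Prop
  | refl (s : S) : CanMeet τ R s s
  | step {s t s' t' : S} (hst : (s, t) ∈ R) (hs : 0 < τ s s') (ht : 0 < τ t t')
      (h : CanMeet τ R s' t') : CanMeet τ R s t

lemma CanMeet.mem (hrefl : ∀ s, (s, s) ∈ R) {s t : S} (h : CanMeet τ R s t) : (s, t) ∈ R := by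
  cases h with
  | refl => exact hrefl s
  | step hst => exact hst

lemma CanMeet.symm (hsymm : ∀ {s t}, (s, t) ∈ R → (t, s) ∈ R) {s t : S}
    (h : CanMeet τ R s t) : CanMeet τ R t s := by
  induction h with
  | refl s => exact .refl s
  | step hst hs ht _ ih => exact .step (hsymm hst) ht hs ih

lemma CanMeet.of_simulation (htrans : ∀ {s t u}, (s, t) ∈ R → (t, u) ∈ R → (s, u) ∈ R)
    {Q : S → S → Prop} (hQR : ∀ {s t}, Q s t → (s, t) ∈ R)
    (hQstep : ∀ {s t t'}, Q s t → 0 < τ t t' → ∃ s', 0 < τ s s' ∧ Q s' t')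
    (hQmeet : ∀ {s t}, Q s t → CanMeet τ R s t)
    {s t u : S} (hst : Q s t) (htu : CanMeet τ R t u) : CanMeet τ R s u := by
  induction htu generalizing s with
  | refl => exact hQmeet hst
  | step htu ht hu _ ih =>
    obtain ⟨s', hs, hst'⟩ := hQstep hst ht
    exact .step (htrans (hQR hst) htu) hs hu (ih hst')

end JointMoves

section Bisimulations

variable {S L : Type*} [Fintype S] {ℓ : S → L} {τ : S → S → ℝ} {R : Set (S × S)}

lemma exists_isPolicy_eqOn (hτ : IsTransFn τ) (hℓ : ∀ p ∈ R, ℓ p.1 = ℓ p.2)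
    {Ω : S × S → S × S → ℝ} (hΩ : ∀ p ∈ R, IsCoupling (Ω p) (τ p.1) (τ p.2)) :
    ∃ P, IsPolicy ℓ τ P ∧ Set.EqOn P Ω R := by
  let P : S × S → S × S → ℝ := fun p =>
    if p ∈ R then Ω p
    else if ℓ p.1 = ℓ p.2 then fun q => τ p.1 q.1 * τ p.2 q.2
    else Pi.single p 1
  have hcoupling : ∀ p : S × S, ℓ p.1 = ℓ p.2 → IsCoupling (P p) (τ p.1) (τ p.2) := by
    intro p hp
    by_cases hpR : p ∈ R
    · simpa only [P, hpR, if_true] using hΩ p hpR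
    · simpa only [P, hpR, hp, if_true, if_false] using isCoupling_mul (hτ p.1) (hτ p.2)
  have hsingle : ∀ p : S × S, ℓ p.1 ≠ ℓ p.2 → P p = Pi.single p 1 := by
    intro p hp
    simp only [P, mt (hℓ p) hp, hp, if_false]
  refine ⟨P, ⟨fun p => ?_, hcoupling, fun p hp => ?_⟩, fun p hp => if_pos hp⟩
  · by_cases hp : ℓ p.1 = ℓ p.2
    · exact (hcoupling p hp).1
    · exact hsingle p hp ▸ isDist_single p
  · ext q
    by_cases hq : q = p <;> simp [psupp, hsingle p hp, hq]

lemma IsBisim.exists_isPolicy_pos (hτ : IsTransFn τ) (hR : IsBisim ℓ τ R) :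
    ∃ P, IsPolicy ℓ τ P ∧ ∀ p ∈ R, psupp (P p) ⊆ R ∧
      ∀ q ∈ R, 0 < τ p.1 q.1 → 0 < τ p.2 q.2 → 0 < P p q := by
  have hΩ : ∀ p ∈ R, IsCoupling (classCoupling R (τ p.1) (τ p.2)) (τ p.1) (τ p.2) := by
    intro p hp
    obtain ⟨-, ω, hω, hωR⟩ := hR.2 p hp
    exact isCoupling_classCoupling hR.1 (hτ _) (hτ _) (hω.classMass_eq hR.1 hωR)
  obtain ⟨P, hP, hPΩ⟩ := exists_isPolicy_eqOn hτ (fun p hp => (hR.2 p hp).1) hΩ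
  refine ⟨P, hP, fun p hp => ?_⟩
  rw [hPΩ hp]
  exact ⟨psupp_classCoupling_subset, fun q hq => classCoupling_pos (hτ p.2).1 hq⟩

lemma mem_filterFn_iff (hτ : IsTransFn τ) (hR : IsBisim ℓ τ R) {s t : S} :
    (s, t) ∈ FilterFn ℓ τ R ↔ CanMeet τ R s t := by
  constructor
  · rintro ⟨-, P, hP, ⟨z, z'⟩, (rfl : z = z'), hpath, -⟩
    suffices ∀ p, Relation.ReflTransGen (SupStep P R) p (z, z) → CanMeet τ R p.1 p.2 from
      this _ hpath
    intro p hp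
    induction hp using Relation.ReflTransGen.head_induction_on with
    | refl => exact .refl z
    | head hstep _ ih =>
      obtain ⟨hmem, -, hpos⟩ := hstep
      have hcoupling := hP.2.1 _ (hR.2 _ hmem).1
      exact .step hmem (hcoupling.left_pos_iff.2 ⟨_, hpos⟩) (hcoupling.right_pos_iff.2 ⟨_, hpos⟩) ih
  · intro h
    obtain ⟨P, hP, hPR⟩ := hR.exists_isPolicy_pos hτ
    refine ⟨h.mem hR.1.refl, P, hP, ?_⟩
    induction h with
    | refl s => exact ⟨(s, s), rfl, .refl, hR.1.refl s, (hPR _ (hR.1.refl s)).1⟩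
    | step hst hs ht h' ih =>
      obtain ⟨q, hq, hpath, hqR⟩ := ih
      obtain ⟨hsupp, hpos⟩ := hPR _ hst
      exact ⟨q, hq, hpath.head ⟨hst, hsupp, hpos _ (h'.mem hR.1.refl) hs ht⟩, hqR⟩

lemma Robust.exists_left_step {s t t' : S} (h : Robust ℓ τ s t) (hℓ : ℓ s = ℓ t)
    (ht : 0 < τ t t') : ∃ s', 0 < τ s s' ∧ Robust ℓ τ s' t' := by
  obtain ⟨P, ρ, hP, hρ, hst⟩ := h
  by_cases hne : s = t
  · exact ⟨t', hne ▸ ht, P, ρ, hP, hρ, hρ.eq_one_of_mem_diagonal t'⟩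
  · have hcoupling := hP.2.1 (s, t) hℓ
    obtain ⟨s', hpos⟩ := hcoupling.right_pos_iff.1 ht
    exact ⟨s', hcoupling.left_pos_iff.2 ⟨_, hpos⟩, P, ρ, hP, hρ,
      hρ.eq_one_of_step hP.1 hst hne hpos⟩

lemma Robust.exists_right_step {s t s' : S} (h : Robust ℓ τ s t) (hℓ : ℓ s = ℓ t)
    (hs : 0 < τ s s') : ∃ t', 0 < τ t t' ∧ Robust ℓ τ s' t' := by
  obtain ⟨P, ρ, hP, hρ, hst⟩ := h
  by_cases hne : s = t
  · exact ⟨s', hne ▸ hs, P, ρ, hP, hρ, hρ.eq_one_of_mem_diagonal s'⟩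
  · have hcoupling := hP.2.1 (s, t) hℓ
    obtain ⟨t', hpos⟩ := hcoupling.left_pos_iff.1 hs
    exact ⟨t', hcoupling.right_pos_iff.2 ⟨_, hpos⟩, P, ρ, hP, hρ,
      hρ.eq_one_of_step hP.1 hst hne hpos⟩

lemma Robust.canMeet (hR : IsBisim ℓ τ R) (hlow : ∀ {s t}, Robust ℓ τ s t → (s, t) ∈ R)
    {s t : S} (h : Robust ℓ τ s t) : CanMeet τ R s t := by
  obtain ⟨P, ρ, hP, hρ, hst⟩ := h
  by_contra hnot
  let U : Set (S × S) := {p | ρ p = 1 ∧ ¬ CanMeet τ R p.1 p.2}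
  have hdiag : Disjoint U (SDelta S) := by
    refine Set.disjoint_left.2 ?_
    rintro ⟨x, y⟩ hx (rfl : x = y)
    exact hx.2 (.refl x)
  have hclosed : IsClosedClass P U := by
    rintro p ⟨hp, hpmeet⟩ q hpq
    have hpR : p ∈ R := hlow ⟨P, ρ, hP, hρ, hp⟩
    have hne : p.1 ≠ p.2 := Set.disjoint_left.1 hdiag ⟨hp, hpmeet⟩
    have hcoupling := hP.2.1 p (hR.2 p hpR).1
    exact ⟨hρ.eq_one_of_step hP.1 hp hne hpq, fun hq => hpmeet (.step hpR
      (hcoupling.left_pos_iff.2 ⟨_, hpq⟩) (hcoupling.right_pos_iff.2 ⟨_, hpq⟩) hq)⟩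
  have hzero := hρ.eq_zero_of_isClosedClass hP.1 hclosed hdiag ⟨hst, hnot⟩
  exact one_ne_zero (hst.symm.trans hzero)

lemma CanMeet.of_robust_left (hR : IsBisim ℓ τ R)
    (hlow : ∀ {s t}, Robust ℓ τ s t → (s, t) ∈ R) {s t u : S} (hst : Robust ℓ τ s t)
    (htu : CanMeet τ R t u) : CanMeet τ R s u :=
  htu.of_simulation hR.1.trans hlow
    (fun h => h.exists_left_step (hR.2 (_, _) (hlow h)).1) (Robust.canMeet hR hlow) hst

lemma CanMeet.of_robust_right (hR : IsBisim ℓ τ R)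
    (hlow : ∀ {s t}, Robust ℓ τ s t → (s, t) ∈ R) {s t u : S} (hst : CanMeet τ R s t)
    (htu : Robust ℓ τ t u) : CanMeet τ R s u :=
  .symm hR.1.symm <| (hst.symm hR.1.symm).of_simulation (Q := fun x y => Robust ℓ τ y x)
    hR.1.trans (fun h => hR.1.symm (hlow h))
    (fun h => h.exists_right_step (hR.2 (_, _) (hlow h)).1)
    (fun h => (h.canMeet hR hlow).symm hR.1.symm) htu

end Bisimulations

theorem filter_partial_transitivity_general {S L : Type*} [Fintype S]
    (ℓ : S → L) (τ : S → S → ℝ) (hτ : IsTransFn τ)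
    (R : Set (S × S)) (hR : IsBisim ℓ τ R)
    (hlow : {p : S × S | Robust ℓ τ p.1 p.2} ⊆ R)
    (s t u : S)
    (hst : (s, t) ∈ FilterFn ℓ τ R) (htu : (t, u) ∈ FilterFn ℓ τ R)
    (hrob : Robust ℓ τ s t ∨ Robust ℓ τ t u) :
    (s, u) ∈ FilterFn ℓ τ R := by
  rw [mem_filterFn_iff hτ hR] at hst htu ⊢
  rcases hrob with hrob | hrob
  · exact htu.of_robust_left hR (fun h => hlow h) hrob
  · exact hst.of_robust_right hR (fun h => hlow h) hrob

/-- Proposition 17: for a bisimulation `R` with `≃ ⊆ R ⊆ ∼`, if `(s,t),(t,u) ∈ Filter(R)`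
and `s ≃ t` or `t ≃ u`, then `(s,u) ∈ Filter(R)`. -/
theorem filter_partial_transitivity {S L : Type*} [Fintype S] [Nonempty S] [Fintype L]
    (ℓ : S → L) (hℓ : ∃ a b : S, ℓ a ≠ ℓ b)
    (τ : S → S → ℝ) (hτ : IsTransFn τ)
    (R : Set (S × S)) (hR : IsBisim ℓ τ R)
    (hlow : {p : S × S | Robust ℓ τ p.1 p.2} ⊆ R)
    (hhigh : R ⊆ {p : S × S | Bisimilar ℓ τ p.1 p.2})
    (s t u : S)
    (hst : (s, t) ∈ FilterFn ℓ τ R) (htu : (t, u) ∈ FilterFn ℓ τ R)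
    (hrob : Robust ℓ τ s t ∨ Robust ℓ τ t u) :
    (s, u) ∈ FilterFn ℓ τ R :=
  filter_partial_transitivity_general ℓ τ hτ R hR hlow s t u hst htu hrob
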